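/- For a real number α, the exponent α is admissible for the complement of the projective rank ξ̄_f if and only if α ≥ 1; that is, the functional (ξ̄_f)_α defined by (ξ̄_f)_α(⊕_{d=1}^r Ḡ_d ⊗ Q_d) = ∑_{d=1}^r ξ̄_f(G_d)·d^α is monotone under cohomomorphisms of noncommutative graphs of this form exactly when α ≥ 1. -/

import Mathlib

open scoped Kronecker
open Matrix

namespace NCG

/-- Existence of a cohomomorphism from `T` to `S` (written `T ≤ S`). -/
def Cohom {A B : Type} [Fintype A] [DecidableEq A] [Fintype B] [DecidableEq B]
    (T : Submodule ℂ (Matrix B B ℂ)) (S : Submodule ℂ (Matrix A A ℂ)) : Prop :=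
  ∃ (k : ℕ) (E : Fin k → Matrix A B ℂ),
    (∑ i, (E i)ᴴ * E i) = 1 ∧ ∀ i j : Fin k, ∀ M ∈ S, (E i)ᴴ * M * E j ∈ T

/-- The noncommutative graph `Ḡ` of a classical graph `G`. -/
noncomputable def graphNC {V : Type} [Fintype V] [DecidableEq V] (G : SimpleGraph V) :
    Submodule ℂ (Matrix V V ℂ) :=
  Submodule.span ℂ {M | ∃ x y : V, (G.Adj x y ∨ x = y) ∧ M = Matrix.single x y 1}

/-- The confusability graph `Q_d = ℂ·I_d` of the noiseless `d`-dimensional quantum channel. -/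
noncomputable def qGraph (d : ℕ) : Submodule ℂ (Matrix (Fin d) (Fin d) ℂ) :=
  Submodule.span ℂ {(1 : Matrix (Fin d) (Fin d) ℂ)}

/-- Tensor product of noncommutative graphs. -/
noncomputable def ncTensor {A B : Type} [Fintype A] [DecidableEq A] [Fintype B] [DecidableEq B]
    (S : Submodule ℂ (Matrix A A ℂ)) (T : Submodule ℂ (Matrix B B ℂ)) :
    Submodule ℂ (Matrix (A × B) (A × B) ℂ) :=
  Submodule.span ℂ {M | ∃ X ∈ S, ∃ Y ∈ T, M = X ⊗ₖ Y}

/-- Direct sum of a finite family of noncommutative graphs. -/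
noncomputable def ncDirectSum {ι : Type} [Fintype ι] [DecidableEq ι] {V : ι → Type}
    [∀ i, Fintype (V i)] [∀ i, DecidableEq (V i)]
    (S : ∀ i, Submodule ℂ (Matrix (V i) (V i) ℂ)) :
    Submodule ℂ (Matrix (Σ i, V i) (Σ i, V i) ℂ) where
  carrier := {M | (∀ p q : Σ i, V i, p.1 ≠ q.1 → M p q = 0) ∧
    ∀ i, (Matrix.of fun x y : V i => M ⟨i, x⟩ ⟨i, y⟩) ∈ S i}
  add_mem' := by
    rintro a b ⟨ha1, ha2⟩ ⟨hb1, hb2⟩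
    refine ⟨fun p q h => ?_, fun i => ?_⟩
    · simp [Matrix.add_apply, ha1 p q h, hb1 p q h]
    · have h := (S i).add_mem (ha2 i) (hb2 i)
      exact h
  zero_mem' := by
    refine ⟨fun p q h => rfl, fun i => ?_⟩
    have h0 : (Matrix.of fun x y : V i =>
        (0 : Matrix (Σ j, V j) (Σ j, V j) ℂ) ⟨i, x⟩ ⟨i, y⟩) = 0 := rfl
    rw [h0]
    exact (S i).zero_mem
  smul_mem' := by
    rintro c a ⟨ha1, ha2⟩
    refine ⟨fun p q h => ?_, fun i => ?_⟩
    · simp [Matrix.smul_apply, ha1 p q h]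
    · have h := (S i).smul_mem c (ha2 i)
      exact h

/-- `⊕_{d=1}^r Ḡ_d ⊗ Q_d`, where `G d` plays the role of `G_{d+1}` for `d : Fin r`. -/
noncomputable def bigSum {r : ℕ} {V : Fin r → Type} [∀ d, Fintype (V d)] [∀ d, DecidableEq (V d)]
    (G : ∀ d, SimpleGraph (V d)) :
    Submodule ℂ (Matrix (Σ d : Fin r, V d × Fin (d.1 + 1))
      (Σ d : Fin r, V d × Fin (d.1 + 1)) ℂ) :=
  ncDirectSum fun d : Fin r => ncTensor (graphNC (G d)) (qGraph (d.1 + 1))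

/-- The extension `F_α` of a graph parameter `F` with exponent `α` is monotone under
cohomomorphisms of noncommutative graphs of the form `⊕_{d=1}^r Ḡ_d ⊗ Q_d`
(the exponent `α` is admissible for `F`). -/
def MonotoneExt (F : ∀ (V : Type) [Fintype V] [DecidableEq V], SimpleGraph V → ℝ)
    (α : ℝ) : Prop :=
  ∀ (r s : ℕ) (V : Fin r → Type) (W : Fin s → Type)
    [∀ d, Fintype (V d)] [∀ d, DecidableEq (V d)]
    [∀ d, Fintype (W d)] [∀ d, DecidableEq (W d)]
    (G : ∀ d, SimpleGraph (V d)) (H : ∀ d, SimpleGraph (W d)),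
    Cohom (bigSum H) (bigSum G) →
    ∑ d : Fin s, F (W d) (H d) * ((d.1 + 1 : ℕ) : ℝ) ^ α ≤
      ∑ d : Fin r, F (V d) (G d) * ((d.1 + 1 : ℕ) : ℝ) ^ α

/-- The projective rank of a graph. -/
noncomputable def projRank {V : Type} [Fintype V] [DecidableEq V] (G : SimpleGraph V) : ℝ :=
  sInf {t : ℝ | ∃ (a b : ℕ) (P : V → Matrix (Fin a) (Fin a) ℂ), 0 < b ∧
    (∀ g, (P g)ᴴ = P g) ∧ (∀ g, P g * P g = P g) ∧ (∀ g, (P g).rank = b) ∧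
    (∀ g g', G.Adj g g' → P g * P g' = 0) ∧ t = (a : ℝ) / (b : ℝ)}

/-- An orthogonal representation of `G` by isometries `ℂ^β → ℂ^α`: the isometries assigned to
adjacent vertices have orthogonal ranges. -/
def IsometricRep {V : Type} (G : SimpleGraph V) (α β : Type) [Fintype α] [DecidableEq β] : Prop :=
  ∃ A : V → Matrix α β ℂ, (∀ g, (A g)ᴴ * A g = 1) ∧ ∀ g g', G.Adj g g' → (A g)ᴴ * A g' = 0

section IsometricRep

variable {V : Type} {G : SimpleGraph V} {α β : Type} [Fintype α] [DecidableEq β]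

theorem IsometricRep.reindex (h : IsometricRep G α β) {α' β' : Type} [Fintype α']
    [DecidableEq β'] (e : α ≃ α') (f : β ≃ β') : IsometricRep G α' β' := by
  obtain ⟨A, h1, h2⟩ := h
  refine ⟨fun g => (A g).submatrix e.symm f.symm, fun g => ?_, fun g g' hg => ?_⟩
  · rw [conjTranspose_submatrix, submatrix_mul_equiv, h1]
    exact submatrix_one_equiv f.symm
  · rw [conjTranspose_submatrix, submatrix_mul_equiv, h2 g g' hg]
    rfl

theorem IsometricRep.prod (h : IsometricRep G α β) (γ : Type) [Fintype γ] [DecidableEq γ] :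
    IsometricRep G (α × γ) (β × γ) := by
  obtain ⟨A, h1, h2⟩ := h
  refine ⟨fun g => A g ⊗ₖ (1 : Matrix γ γ ℂ), fun g => ?_, fun g g' hg => ?_⟩
  · rw [conjTranspose_kronecker, ← mul_kronecker_mul, h1, conjTranspose_one, one_mul,
      one_kronecker_one]
  · rw [conjTranspose_kronecker, ← mul_kronecker_mul, h2 g g' hg, zero_kronecker]

theorem IsometricRep.scale {a b : ℕ} (h : IsometricRep G (Fin a) (Fin b)) (m : ℕ) :
    IsometricRep G (Fin (a * m)) (Fin (b * m)) :=
  (h.prod (Fin m)).reindex finProdFinEquiv finProdFinEquiv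

/-- The coordinates give an isometric representation by vectors. -/
theorem isometricRep_coordinates [Fintype V] [DecidableEq V] (G : SimpleGraph V) :
    IsometricRep G V Unit := by
  refine ⟨fun g => Matrix.of fun x _ => if x = g then 1 else 0, fun g => ?_, fun g g' hg => ?_⟩
  · ext i j
    simp [Matrix.mul_apply]
  · ext i j
    simp [Matrix.mul_apply, hg.ne']

open scoped ComplexOrder in
theorem card_le_of_conjTranspose_mul_self_eq_one [Fintype β] {X : Matrix α β ℂ}
    (h : Xᴴ * X = 1) : Fintype.card β ≤ Fintype.card α := by
  rw [← Matrix.rank_one (R := ℂ) (n := β), ← h, rank_conjTranspose_mul_self]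
  exact Matrix.rank_le_card_height X

theorem projRank_set_bddBelow (G : SimpleGraph V) :
    BddBelow {t : ℝ | ∃ (a b : ℕ) (P : V → Matrix (Fin a) (Fin a) ℂ), 0 < b ∧
    (∀ g, (P g)ᴴ = P g) ∧ (∀ g, P g * P g = P g) ∧ (∀ g, (P g).rank = b) ∧
    (∀ g g', G.Adj g g' → P g * P g' = 0) ∧ t = (a : ℝ) / (b : ℝ)} := by
  refine ⟨0, ?_⟩
  rintro t ⟨a, b, P, -, -, -, -, -, rfl⟩
  positivity

open scoped ComplexOrder in
theorem IsometricRep.exists_projections {a b : ℕ} (h : IsometricRep G (Fin a) (Fin b)) :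
    ∃ P : V → Matrix (Fin a) (Fin a) ℂ,
    (∀ g, (P g)ᴴ = P g) ∧ (∀ g, P g * P g = P g) ∧ (∀ g, (P g).rank = b) ∧
    (∀ g g', G.Adj g g' → P g * P g' = 0) := by
  obtain ⟨A, h1, h2⟩ := h
  refine ⟨fun g => A g * (A g)ᴴ, fun g => ?_, fun g => ?_, fun g => ?_, fun g g' hg => ?_⟩
  · simp
  · rw [Matrix.mul_assoc, ← Matrix.mul_assoc (A g)ᴴ, h1, Matrix.one_mul]
  · rw [rank_self_mul_conjTranspose, ← rank_conjTranspose_mul_self, h1, rank_one, Fintype.card_fin]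
  · rw [Matrix.mul_assoc, ← Matrix.mul_assoc (A g)ᴴ, h2 g g' hg, Matrix.zero_mul, Matrix.mul_zero]

theorem IsometricRep.projRank_le [Fintype V] [DecidableEq V] [Fintype β] [Nonempty β]
    (h : IsometricRep G α β) :
    projRank G ≤ (Fintype.card α : ℝ) / Fintype.card β := by
  obtain ⟨P, hP1, hP2, hP3, hP4⟩ :=
    (h.reindex (Fintype.equivFin α) (Fintype.equivFin β)).exists_projections
  exact csInf_le (projRank_set_bddBelow G)
    ⟨_, _, P, Fintype.card_pos, hP1, hP2, hP3, hP4, rfl⟩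

theorem isometricRep_of_projections {a b : ℕ} (P : V → Matrix (Fin a) (Fin a) ℂ)
    (hP1 : ∀ g, (P g)ᴴ = P g) (hP2 : ∀ g, P g * P g = P g) (hP3 : ∀ g, (P g).rank = b)
    (hP4 : ∀ g g', G.Adj g g' → P g * P g' = 0) : IsometricRep G (Fin a) (Fin b) := by
  have key : ∀ g, ∃ A : Matrix (Fin a) (Fin b) ℂ, Aᴴ * A = 1 ∧ P g * A = A := by
    intro g
    let T := (P g).toEuclideanLin
    have hr : Module.finrank ℂ (LinearMap.range T) = b := by
      rw [← hP3 g, (P g).rank_eq_finrank_range_toLin (EuclideanSpace.basisFun _ ℂ).toBasis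
        (EuclideanSpace.basisFun _ ℂ).toBasis, ← Matrix.toEuclideanLin_eq_toLin_orthonormal]
    let u := (stdOrthonormalBasis ℂ (LinearMap.range T)).reindex (finCongr hr)
    refine ⟨Matrix.of fun i k => (u k : EuclideanSpace ℂ (Fin a)) i, ?_, ?_⟩
    · ext k l
      have := orthonormal_iff_ite.1 u.orthonormal k l
      rw [Matrix.one_apply, ← this, Submodule.coe_inner, PiLp.inner_apply, Matrix.mul_apply]
      simp [mul_comm]
    · ext i k
      obtain ⟨x, hx⟩ := (u k).2
      have h1 : T (u k) = u k := by
        rw [← hx]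
        simp only [T, Matrix.toLpLin_apply, Matrix.mulVec_mulVec, hP2]
      have h2 := congrArg (fun v : EuclideanSpace ℂ (Fin a) => v i) h1
      simpa [T, Matrix.toLpLin_apply, Matrix.mulVec, dotProduct, Matrix.mul_apply] using h2
  choose A hA1 hA2 using key
  refine ⟨A, hA1, fun g g' hg => ?_⟩
  rw [← hA2 g, ← hA2 g', conjTranspose_mul, hP1, Matrix.mul_assoc, ← Matrix.mul_assoc (P g),
    hP4 g g' hg, Matrix.zero_mul, Matrix.mul_zero]

theorem exists_isometricRep_lt [Fintype V] [DecidableEq V] (G : SimpleGraph V)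
    {ε : ℝ} (hε : 0 < ε) :
    ∃ a b : ℕ, 0 < b ∧ IsometricRep G (Fin a) (Fin b) ∧ (a : ℝ) / b < projRank G + ε := by
  obtain ⟨P, hP1, hP2, hP3, hP4⟩ := ((isometricRep_coordinates G).reindex
    (Fintype.equivFin V) (Fintype.equivFin Unit)).exists_projections
  obtain ⟨t, ⟨a, b, Q, hb, h1, h2, h3, h4, rfl⟩, ht⟩ := exists_lt_of_csInf_lt
    (s := {t : ℝ | ∃ (a b : ℕ) (P : V → Matrix (Fin a) (Fin a) ℂ), 0 < b ∧
      (∀ g, (P g)ᴴ = P g) ∧ (∀ g, P g * P g = P g) ∧ (∀ g, (P g).rank = b) ∧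
      (∀ g g', G.Adj g g' → P g * P g' = 0) ∧ t = (a : ℝ) / (b : ℝ)})
    ⟨_, _, _, P, Fintype.card_pos, hP1, hP2, hP3, hP4, rfl⟩ (lt_add_of_pos_right (projRank G) hε)
  exact ⟨a, b, hb, isometricRep_of_projections Q h1 h2 h3 h4, ht⟩

/-- An isometric representation can be compressed to any subspace containing all the ranges. -/
theorem IsometricRep.compress {J : Type} [Fintype J] (R : Submodule ℂ (EuclideanSpace ℂ J))
    (B : V → Matrix J β ℂ) (hR : ∀ g q, WithLp.toLp 2 ((B g)ᵀ q) ∈ R)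
    (h1 : ∀ g, (B g)ᴴ * B g = 1) (h2 : ∀ g g', G.Adj g g' → (B g)ᴴ * B g' = 0) :
    IsometricRep G (Fin (Module.finrank ℂ R)) β := by
  let b := stdOrthonormalBasis ℂ R
  let A : V → Matrix (Fin (Module.finrank ℂ R)) β ℂ := fun g =>
    Matrix.of fun i q => inner ℂ (b i) ⟨_, hR g q⟩
  have key : ∀ g g', (A g)ᴴ * A g' = (B g)ᴴ * B g' := by
    intro g g'
    ext q q'
    have h := b.sum_inner_mul_inner ⟨_, hR g q⟩ ⟨_, hR g' q'⟩
    rw [Submodule.coe_inner] at h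
    refine Eq.trans ?_ (h.trans (inner_matrix_col_col (B g) (B g') q q'))
    rw [Matrix.mul_apply]
    simp [A]
  exact ⟨A, fun g => by rw [key, h1], fun g g' hg => by rw [key, h2 g g' hg]⟩

end IsometricRep

/-- A weighted dimension count: if each vector of an orthonormal family is supported on coordinates
of at least its own weight, then the total weight of the family is at most that of the
coordinates. -/
theorem sum_weight_le_of_orthonormal {J K : Type} [Fintype J] [DecidableEq J] [Fintype K]
    (v : K → EuclideanSpace ℂ J)
    (hv : Orthonormal ℂ v) (w : K → ℝ) (u : J → ℝ) (hu : ∀ j, 0 ≤ u j)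
    (h : ∀ k j, v k j ≠ 0 → w k ≤ u j) : ∑ k, w k ≤ ∑ j, u j := by
  calc ∑ k, w k = ∑ k, ∑ j, w k * ‖v k j‖ ^ 2 := by
        refine Finset.sum_congr rfl fun k _ => ?_
        rw [← Finset.mul_sum, ← EuclideanSpace.norm_sq_eq, hv.1 k]
        simp
    _ ≤ ∑ k, ∑ j, u j * ‖v k j‖ ^ 2 := by
        refine Finset.sum_le_sum fun k _ => Finset.sum_le_sum fun j _ => ?_
        by_cases hkj : v k j = 0
        · simp [hkj]
        · exact mul_le_mul_of_nonneg_right (h k j hkj) (by positivity)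
    _ = ∑ j, u j * ∑ k, ‖v k j‖ ^ 2 := by
        rw [Finset.sum_comm]
        simp_rw [Finset.mul_sum]
    _ ≤ ∑ j, u j := by
        refine Finset.sum_le_sum fun j _ => mul_le_of_le_one_right (hu j) ?_
        have := hv.sum_inner_products_le (EuclideanSpace.single j (1 : ℂ)) (s := Finset.univ)
        simpa [EuclideanSpace.inner_single_right] using this

theorem exists_coeff_of_mem_ncTensor {V : Type} [Fintype V] [DecidableEq V] {G : SimpleGraph V}
    {n : ℕ} {M : Matrix (V × Fin n) (V × Fin n) ℂ} (hM : M ∈ ncTensor (graphNC G) (qGraph n)) :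
    ∃ c : Matrix V V ℂ, (∀ x y, ¬(G.Adj x y ∨ x = y) → c x y = 0) ∧
      M = c ⊗ₖ (1 : Matrix (Fin n) (Fin n) ℂ) := by
  induction hM using Submodule.span_induction with
  | mem M h =>
    obtain ⟨X, hX, Y, hY, rfl⟩ := h
    obtain ⟨t, rfl⟩ := Submodule.mem_span_singleton.1 hY
    refine ⟨t • X, ?_, by rw [kronecker_smul, smul_kronecker]⟩
    suffices h : ∀ x y, ¬(G.Adj x y ∨ x = y) → X x y = 0 by
      intro x y hxy
      simp [h x y hxy]
    intro x y hxy
    induction hX using Submodule.span_induction with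
    | mem M h =>
      obtain ⟨x', y', h', rfl⟩ := h
      refine Matrix.single_apply_of_ne _ _ _ _ _ ?_
      rintro ⟨rfl, rfl⟩
      exact hxy h'
    | zero => rfl
    | add M N _ _ hM hN => simp [hM, hN]
    | smul t M _ hM => simp [hM]
  | zero => exact ⟨0, fun _ _ _ => rfl, by rw [zero_kronecker]⟩
  | add M N _ _ hM hN =>
    obtain ⟨c, hc, rfl⟩ := hM
    obtain ⟨c', hc', rfl⟩ := hN
    exact ⟨c + c', fun x y h => by simp [hc x y h, hc' x y h], by rw [add_kronecker]⟩
  | smul t M _ hM =>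
    obtain ⟨c, hc, rfl⟩ := hM
    exact ⟨t • c, fun x y h => by simp [hc x y h], by rw [smul_kronecker]⟩

/-- The matrix `|g⟩⟨g'| ⊗ I` in the block `d` of a direct sum. -/
noncomputable def blockUnit {r : ℕ} {V : Fin r → Type} [∀ d, DecidableEq (V d)] (d : Fin r)
    (g g' : V d) : Matrix (Σ d : Fin r, V d × Fin (d.1 + 1)) (Σ d : Fin r, V d × Fin (d.1 + 1)) ℂ :=
  ∑ y : Fin (d.1 + 1), Matrix.single ⟨d, (g, y)⟩ ⟨d, (g', y)⟩ 1

theorem blockUnit_mem_bigSum {r : ℕ} {V : Fin r → Type} [∀ d, Fintype (V d)]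
    [∀ d, DecidableEq (V d)] (G : ∀ d, SimpleGraph (V d)) (d : Fin r) (g g' : V d)
    (h : (G d).Adj g g' ∨ g = g') : blockUnit d g g' ∈ bigSum G := by
  refine ⟨fun p q hpq => ?_, fun e => ?_⟩
  · rw [blockUnit, Matrix.sum_apply]
    refine Finset.sum_eq_zero fun y _ => Matrix.single_apply_of_ne _ _ _ _ _ ?_
    rintro ⟨rfl, rfl⟩
    exact hpq rfl
  · by_cases he : e = d
    · subst he
      refine Submodule.subset_span ⟨Matrix.single g g' 1, Submodule.subset_span ⟨g, g', h, rfl⟩,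
        1, Submodule.mem_span_singleton_self _, ?_⟩
      ext ⟨x, y⟩ ⟨x', y'⟩
      simp only [blockUnit, Matrix.of_apply, Matrix.sum_apply, Matrix.single_apply,
        kroneckerMap_apply, Matrix.one_apply]
      by_cases h1 : g = x <;> by_cases h2 : g' = x' <;> by_cases h3 : y = y' <;>
        simp [h1, h2, h3]
    · convert Submodule.zero_mem _
      ext x y
      simp only [blockUnit, Matrix.of_apply, Matrix.sum_apply]
      refine Finset.sum_eq_zero fun y _ => Matrix.single_apply_of_ne _ _ _ _ _ ?_
      rintro ⟨h, -⟩
      exact he (congrArg Sigma.fst h).symm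

/-- The block of a Kraus operator between two vertices. -/
def krausBlock {r s : ℕ} {V : Fin r → Type} {W : Fin s → Type}
    (E : Matrix (Σ d : Fin r, V d × Fin (d.1 + 1)) (Σ d : Fin s, W d × Fin (d.1 + 1)) ℂ)
    (k : Σ d, W d) (p : Σ d, V d) : Matrix (Fin (p.1.1 + 1)) (Fin (k.1.1 + 1)) ℂ :=
  Matrix.of fun y l => E ⟨p.1, (p.2, y)⟩ ⟨k.1, (k.2, l)⟩

theorem krausBlock_mul_apply {r s : ℕ} {V : Fin r → Type} {W : Fin s → Type}
    [∀ d, Fintype (V d)] [∀ d, DecidableEq (V d)]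
    (E F : Matrix (Σ d : Fin r, V d × Fin (d.1 + 1)) (Σ d : Fin s, W d × Fin (d.1 + 1)) ℂ)
    (d : Fin r) (g g' : V d) (k k' : Σ d, W d) (l : Fin (k.1.1 + 1)) (l' : Fin (k'.1.1 + 1)) :
    ((krausBlock E k ⟨d, g⟩)ᴴ * krausBlock F k' ⟨d, g'⟩) l l' =
      (Eᴴ * blockUnit d g g' * F) ⟨k.1, (k.2, l)⟩ ⟨k'.1, (k'.2, l')⟩ := by
  rw [blockUnit, Matrix.mul_sum, Matrix.sum_mul, Matrix.sum_apply, Matrix.mul_apply]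
  refine Finset.sum_congr rfl fun y _ => ?_
  rw [Matrix.mul_assoc, Matrix.mul_apply, Finset.sum_eq_single ⟨d, (g, y)⟩]
  · simp [krausBlock]
  · intro p _ hp
    rw [Matrix.single_mul_apply_of_ne (c := (1 : ℂ)) (h := hp), mul_zero]
  · simp

theorem exists_smul_isometry {m n : ℕ} (X : Matrix (Fin m) (Fin n) ℂ) (c : ℂ)
    (hX : Xᴴ * X = c • 1) (h0 : X ≠ 0) : ∃ t : ℂ, (t • X)ᴴ * (t • X) = 1 := by
  obtain ⟨i, j, hij⟩ : ∃ i j, X i j ≠ 0 := by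
    by_contra! h
    exact h0 (Matrix.ext h)
  have hc : c = ((∑ i, ‖X i j‖ ^ 2 : ℝ) : ℂ) := by
    have h := congrFun (congrFun hX j) j
    rw [Matrix.mul_apply] at h
    simp only [conjTranspose_apply, Matrix.smul_apply, one_apply_eq, smul_eq_mul, mul_one] at h
    rw [← h]
    push_cast
    refine Finset.sum_congr rfl fun i _ => ?_
    exact Complex.conj_mul' _
  have hpos : 0 < ∑ i, ‖X i j‖ ^ 2 :=
    Finset.sum_pos' (fun _ _ => by positivity) ⟨i, Finset.mem_univ _, by positivity⟩
  refine ⟨((Real.sqrt (∑ i, ‖X i j‖ ^ 2))⁻¹ : ℝ), ?_⟩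
  rw [conjTranspose_smul, Matrix.smul_mul, Matrix.mul_smul, hX, hc, smul_smul, smul_smul]
  convert one_smul ℂ _
  rw [Complex.star_def, Complex.conj_ofReal, ← Complex.ofReal_mul, ← Complex.ofReal_mul,
    ← Complex.ofReal_one, Complex.ofReal_inj, ← mul_inv, Real.mul_self_sqrt hpos.le,
    inv_mul_cancel₀ hpos.ne']

/-- The vertices of `⊕ H_d` that are either in different summands, or nonadjacent and distinct. -/
def Distinguishable {s : ℕ} {W : Fin s → Type} (H : ∀ d, SimpleGraph (W d))
    (k k' : Σ d, W d) : Prop :=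
  k.1 ≠ k'.1 ∨ ∃ d h h', k = ⟨d, h⟩ ∧ k' = ⟨d, h'⟩ ∧ (H d)ᶜ.Adj h h'

/-- A cohomomorphism yields, for each vertex of the source, a vertex of the target together with an
isometry, such that distinguishable vertices over confusable ones get orthogonal ranges. -/
theorem Cohom.exists_isometries {r s : ℕ} {V : Fin r → Type} {W : Fin s → Type}
    [∀ d, Fintype (V d)] [∀ d, DecidableEq (V d)] [∀ d, Fintype (W d)] [∀ d, DecidableEq (W d)]
    {G : ∀ d, SimpleGraph (V d)} {H : ∀ d, SimpleGraph (W d)}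
    (hc : Cohom (bigSum H) (bigSum G)) :
    ∃ (φ : (Σ d, W d) → Σ d, V d)
      (X : ∀ (k : Σ d, W d) (p : Σ d, V d), Matrix (Fin (p.1.1 + 1)) (Fin (k.1.1 + 1)) ℂ),
      (∀ k, (X k (φ k))ᴴ * X k (φ k) = 1) ∧
      ∀ k k' d (g g' : V d), Distinguishable H k k' → ((G d).Adj g g' ∨ g = g') →
        (X k ⟨d, g⟩)ᴴ * X k' ⟨d, g'⟩ = 0 := by
  obtain ⟨n, E, hE1, hE2⟩ := hc
  have hself : ∀ i k p, ∃ c : ℂ, (krausBlock (E i) k p)ᴴ * krausBlock (E i) k p = c • 1 := by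
    rintro i ⟨e, h⟩ ⟨d, g⟩
    obtain ⟨c, -, hM⟩ := exists_coeff_of_mem_ncTensor
      ((hE2 i i _ (blockUnit_mem_bigSum G d g g (Or.inr rfl))).2 e)
    refine ⟨c h h, ?_⟩
    ext l l'
    rw [krausBlock_mul_apply]
    exact congrFun (congrFun hM (h, l)) (h, l')
  have horth : ∀ i j k k' d (g g' : V d), Distinguishable H k k' → ((G d).Adj g g' ∨ g = g') →
      (krausBlock (E i) k ⟨d, g⟩)ᴴ * krausBlock (E j) k' ⟨d, g'⟩ = 0 := by
    intro i j k k' d g g' hk hg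
    have hmem := hE2 i j _ (blockUnit_mem_bigSum G d g g' hg)
    ext l l'
    rw [krausBlock_mul_apply]
    rcases hk with hk | ⟨e, h, h', rfl, rfl, hadj⟩
    · exact hmem.1 _ _ hk
    · obtain ⟨c, hc, hM⟩ := exists_coeff_of_mem_ncTensor (hmem.2 e)
      refine (congrFun (congrFun hM (h, l)) (h', l')).trans ?_
      rw [SimpleGraph.compl_adj] at hadj
      rw [kroneckerMap_apply, hc h h' (by tauto), zero_mul]
      rfl
  have hne : ∀ k : Σ d, W d, ∃ i p, krausBlock (E i) k p ≠ 0 := by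
    intro k
    by_contra! h
    have h1 := congrFun (congrFun hE1 ⟨k.1, (k.2, 0)⟩) ⟨k.1, (k.2, 0)⟩
    rw [Matrix.one_apply_eq, Matrix.sum_apply] at h1
    refine zero_ne_one (h1.symm.trans ?_).symm
    refine Finset.sum_eq_zero fun i _ => ?_
    rw [Matrix.mul_apply]
    refine Finset.sum_eq_zero fun p _ => ?_
    have h2 : E i p ⟨k.1, (k.2, 0)⟩ = 0 := congrFun (congrFun (h i ⟨p.1, p.2.1⟩) p.2.2) 0
    rw [h2, mul_zero]
  choose i φ hφ using hne
  choose c hcc using hself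
  choose t ht using fun k => exists_smul_isometry _ _ (hcc (i k) k (φ k)) (hφ k)
  refine ⟨φ, fun k p => t k • krausBlock (E (i k)) k p, ht, fun k k' d g g' hk hg => ?_⟩
  rw [conjTranspose_smul, Matrix.smul_mul, Matrix.mul_smul, horth _ _ _ _ _ _ _ hk hg, smul_zero,
    smul_zero]

/-- A matrix placed in the block of rows indexed by `d`. -/
def rowBlock {ι Q : Type} [DecidableEq ι] {I : ι → Type} (d : ι) (M : Matrix (I d) Q ℂ) :
    Matrix (Σ d, I d) Q ℂ :=
  Matrix.of fun p q => (Pi.single d M : ∀ e, Matrix (I e) Q ℂ) p.1 p.2 q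

theorem rowBlock_apply_of_ne {ι Q : Type} [DecidableEq ι] {I : ι → Type} {d : ι}
    (M : Matrix (I d) Q ℂ) {p : Σ d, I d} (h : p.1 ≠ d) (q : Q) : rowBlock d M p q = 0 := by
  simp [rowBlock, Pi.single_eq_of_ne h]

theorem rowBlock_mul_same {ι Q Q' : Type} [Fintype ι] [DecidableEq ι] {I : ι → Type}
    [∀ d, Fintype (I d)] (d : ι) (M : Matrix (I d) Q ℂ) (N : Matrix (I d) Q' ℂ) :
    (rowBlock d M)ᴴ * rowBlock d N = Mᴴ * N := by
  ext q q'
  rw [Matrix.mul_apply, Fintype.sum_sigma, Finset.sum_eq_single d, Matrix.mul_apply]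
  · simp [rowBlock]
  · intro e _ he
    simp [rowBlock, Pi.single_eq_of_ne he]
  · simp

theorem rowBlock_mul_of_ne {ι Q Q' : Type} [Fintype ι] [DecidableEq ι] {I : ι → Type}
    [∀ d, Fintype (I d)] {d e : ι} (h : d ≠ e) (M : Matrix (I d) Q ℂ) (N : Matrix (I e) Q' ℂ) :
    (rowBlock d M)ᴴ * rowBlock e N = 0 := by
  ext q q'
  rw [Matrix.mul_apply]
  refine Finset.sum_eq_zero fun p _ => ?_
  by_cases hp : p.1 = d
  · rw [rowBlock_apply_of_ne N (hp ▸ h), mul_zero]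
  · rw [conjTranspose_apply, rowBlock_apply_of_ne M hp, star_zero, zero_mul]

theorem Cohom.exists_stacked_isometries {r s : ℕ} {V : Fin r → Type} {W : Fin s → Type}
    [∀ d, Fintype (V d)] [∀ d, DecidableEq (V d)] [∀ d, Fintype (W d)] [∀ d, DecidableEq (W d)]
    {G : ∀ d, SimpleGraph (V d)} {H : ∀ d, SimpleGraph (W d)}
    (hc : Cohom (bigSum H) (bigSum G)) {a : Fin r → ℕ} {b : ℕ}
    (hG : ∀ d, IsometricRep (G d)ᶜ (Fin (a d)) (Fin b)) :
    ∃ B : ∀ k : Σ d, W d,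
        Matrix (Σ d : Fin r, Fin (a d) × Fin (d.1 + 1)) (Fin b × Fin (k.1.1 + 1)) ℂ,
      (∀ k, (B k)ᴴ * B k = 1) ∧ (∀ k k', Distinguishable H k k' → (B k)ᴴ * B k' = 0) ∧
      ∀ k p q, B k p q ≠ 0 → k.1.1 ≤ p.1.1 := by
  obtain ⟨φ, X, hX1, hX2⟩ := hc.exists_isometries
  choose A hA1 hA2 using hG
  let C : ∀ (k : Σ d, W d) (p : Σ d, V d),
      Matrix (Σ d : Fin r, Fin (a d) × Fin (d.1 + 1)) (Fin b × Fin (k.1.1 + 1)) ℂ :=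
    fun k p => rowBlock p.1 (A p.1 p.2 ⊗ₖ X k p)
  have horth : ∀ k k' p p', Distinguishable H k k' → (C k p)ᴴ * C k' p' = 0 := by
    rintro k k' ⟨d, g⟩ ⟨d', g'⟩ hk
    by_cases hd : d = d'
    · subst hd
      simp only [C]
      rw [rowBlock_mul_same, conjTranspose_kronecker, ← mul_kronecker_mul]
      by_cases hg : (G d).Adj g g' ∨ g = g'
      · rw [hX2 k k' d g g' hk hg, kronecker_zero]
      · rw [hA2 d g g' (by rw [SimpleGraph.compl_adj]; tauto), zero_kronecker]
    · exact rowBlock_mul_of_ne hd _ _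
  refine ⟨fun k => C k (φ k), fun k => ?_, fun k k' hk => horth _ _ _ _ hk, fun k p q h => ?_⟩
  · simp only [C]
    rw [rowBlock_mul_same, conjTranspose_kronecker, ← mul_kronecker_mul, hA1, hX1,
      one_kronecker_one]
  · have hp : p.1 = (φ k).1 := by
      by_contra hp
      exact h (rowBlock_apply_of_ne _ hp q)
    have hle := card_le_of_conjTranspose_mul_self_eq_one (hX1 k)
    simp only [Fintype.card_fin] at hle
    rw [hp]
    omega

/-- The projective ranks of the summands are controlled by any family of isometries into a
coordinate space, when each range is supported on coordinates of weight at least that of its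
summand. -/
theorem sum_projRank_mul_weight_le {s b : ℕ} (hb : 0 < b) {W : Fin s → Type}
    [∀ d, Fintype (W d)] [∀ d, DecidableEq (W d)] (H : ∀ d, SimpleGraph (W d))
    {J : Type} [Fintype J] [DecidableEq J]
    (B : ∀ e, W e → Matrix J (Fin b × Fin (e.1 + 1)) ℂ)
    (hB1 : ∀ e h, (B e h)ᴴ * B e h = 1)
    (hB2 : ∀ e h e' h', Distinguishable H ⟨e, h⟩ ⟨e', h'⟩ → (B e h)ᴴ * B e' h' = 0)
    (w : Fin s → ℝ) (hw : ∀ e, 0 ≤ w e) (u : J → ℝ) (hu : ∀ j, 0 ≤ u j)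
    (hB3 : ∀ e h j q, B e h j q ≠ 0 → w e ≤ u j) :
    ∑ e : Fin s, projRank (H e)ᶜ * (b * ((e.1 + 1 : ℕ) : ℝ)) * w e ≤ ∑ j, u j := by
  have : NeZero b := ⟨hb.ne'⟩
  let R : Fin s → Submodule ℂ (EuclideanSpace ℂ J) := fun e =>
    Submodule.span ℂ (Set.range fun x : W e × (Fin b × Fin (e.1 + 1)) =>
      WithLp.toLp 2 ((B e x.1)ᵀ x.2))
  have hH : ∀ e, projRank (H e)ᶜ * (b * ((e.1 + 1 : ℕ) : ℝ)) ≤ Module.finrank ℂ (R e) := by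
    intro e
    have h := (IsometricRep.compress (G := (H e)ᶜ) (R e) (B e)
      (fun h q => Submodule.subset_span ⟨(h, q), rfl⟩) (hB1 e)
      (fun h h' hadj => hB2 _ _ _ _ (Or.inr ⟨e, h, h', rfl, rfl, hadj⟩))).projRank_le
    simp only [Fintype.card_fin, Fintype.card_prod] at h
    rw [le_div_iff₀ (by positivity)] at h
    exact_mod_cast h
  have hR : OrthogonalFamily ℂ (fun e => R e) fun e => (R e).subtypeₗᵢ := by
    refine OrthogonalFamily.of_pairwise fun e e' hne => ?_
    refine Submodule.isOrtho_span.2 ?_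
    rintro _ ⟨x, rfl⟩ _ ⟨x', rfl⟩
    refine Eq.trans ?_ (congrFun (congrFun (hB2 e x.1 e' x'.1 (Or.inl hne)) x.2) x'.2)
    simp [PiLp.inner_apply, Matrix.mul_apply, mul_comm]
  have hv := hR.orthonormal_sigma_orthonormal
    (fun e => (stdOrthonormalBasis ℂ (R e)).orthonormal)
  have hsupp : ∀ e, ∀ x ∈ R e, ∀ j : J, x j ≠ 0 → w e ≤ u j := by
    intro e x hx j
    contrapose!
    intro hlt
    induction hx using Submodule.span_induction with
    | mem x h =>
      obtain ⟨⟨h, q⟩, rfl⟩ := h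
      exact not_not.1 fun h0 => hlt.not_ge (hB3 e h j q h0)
    | zero => rfl
    | add x y _ _ hx hy => rw [PiLp.add_apply, hx, hy, add_zero]
    | smul t x _ hx => rw [PiLp.smul_apply, hx, smul_zero]
  have hcount := sum_weight_le_of_orthonormal _ hv (fun k => w k.1) u hu
    (fun k j hkj => hsupp k.1 _ (stdOrthonormalBasis ℂ (R k.1) k.2).2 j hkj)
  simp only [Fintype.sum_sigma, Finset.sum_const, Finset.card_univ,
    Fintype.card_fin, nsmul_eq_mul] at hcount
  exact (Finset.sum_le_sum fun e _ => mul_le_mul_of_nonneg_right (hH e) (hw e)).trans hcount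

theorem Cohom.sum_projRank_le {r s : ℕ} {V : Fin r → Type} {W : Fin s → Type}
    [∀ d, Fintype (V d)] [∀ d, DecidableEq (V d)] [∀ d, Fintype (W d)] [∀ d, DecidableEq (W d)]
    {G : ∀ d, SimpleGraph (V d)} {H : ∀ d, SimpleGraph (W d)}
    (hc : Cohom (bigSum H) (bigSum G)) {a : Fin r → ℕ} {b : ℕ} (hb : 0 < b)
    (hG : ∀ d, IsometricRep (G d)ᶜ (Fin (a d)) (Fin b)) {α : ℝ} (hα : 1 ≤ α) :
    ∑ d : Fin s, projRank (H d)ᶜ * ((d.1 + 1 : ℕ) : ℝ) ^ α ≤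
      ∑ d : Fin r, (a d : ℝ) / b * ((d.1 + 1 : ℕ) : ℝ) ^ α := by
  obtain ⟨B, hB1, hB2, hB3⟩ := hc.exists_stacked_isometries hG
  have hpow : ∀ m : ℕ, ((m + 1 : ℕ) : ℝ) ^ α = (m + 1 : ℕ) * ((m + 1 : ℕ) : ℝ) ^ (α - 1) := by
    intro m
    rw [Real.rpow_sub_one (by positivity), mul_div_cancel₀ _ (by positivity)]
  have hcount := sum_projRank_mul_weight_le hb H (fun e h => B ⟨e, h⟩)
    (fun e h => hB1 ⟨e, h⟩) (fun e h e' h' => hB2 ⟨e, h⟩ ⟨e', h'⟩)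
    (fun e => ((e.1 + 1 : ℕ) : ℝ) ^ (α - 1)) (fun e => by positivity)
    (fun j => ((j.1.1 + 1 : ℕ) : ℝ) ^ (α - 1)) (fun j => by positivity)
    (fun e h j q hne => Real.rpow_le_rpow (by positivity)
      (by exact_mod_cast Nat.succ_le_succ (hB3 ⟨e, h⟩ j q hne)) (by linarith))
  simp only [Fintype.sum_sigma, Finset.sum_const, Finset.card_univ, Fintype.card_prod,
    Fintype.card_fin, nsmul_eq_mul] at hcount
  have hb' : (0 : ℝ) < b := by exact_mod_cast hb
  refine le_of_mul_le_mul_right ?_ hb'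
  rw [Finset.sum_mul, Finset.sum_mul]
  refine (Finset.sum_congr rfl fun e _ => ?_).trans_le
    (hcount.trans_eq (Finset.sum_congr rfl fun d _ => ?_))
  · rw [hpow]
    ring
  · rw [hpow, Nat.cast_mul]
    field_simp

theorem monotoneExt_of_one_le {α : ℝ} (hα : 1 ≤ α) :
    MonotoneExt (fun (V : Type) (iV : Fintype V) (eV : DecidableEq V)
      (G : SimpleGraph V) => @projRank V iV eV Gᶜ) α := by
  intro r s V W _ _ _ _ G H hc
  let c : ℝ := ∑ d : Fin r, ((d.1 + 1 : ℕ) : ℝ) ^ α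
  suffices h : ∀ ε : ℝ, 0 < ε → ∑ d : Fin s, projRank (H d)ᶜ * ((d.1 + 1 : ℕ) : ℝ) ^ α ≤
      ∑ d : Fin r, projRank (G d)ᶜ * ((d.1 + 1 : ℕ) : ℝ) ^ α + ε * c by
    have hc0 : 0 ≤ c := Finset.sum_nonneg fun d _ => by positivity
    refine le_of_forall_pos_le_add fun ε hε => (h (ε / (c + 1)) (by positivity)).trans ?_
    gcongr
    rw [div_mul_eq_mul_div, div_le_iff₀ (by positivity)]
    nlinarith
  intro ε hε
  choose a b hb hrep hlt using fun d => exists_isometricRep_lt (G d)ᶜ hε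
  let m : Fin r → ℕ := fun d => ∏ e ∈ Finset.univ.erase d, b e
  have hm : ∀ d, b d * m d = ∏ e, b e := fun d => Finset.mul_prod_erase _ _ (Finset.mem_univ d)
  have hbpos : 0 < ∏ e, b e := Finset.prod_pos fun e _ => hb e
  have h := hc.sum_projRank_le hbpos (a := fun d => a d * m d)
    (fun d => hm d ▸ (hrep d).scale (m d)) hα
  refine h.trans ?_
  rw [Finset.mul_sum, ← Finset.sum_add_distrib]
  refine Finset.sum_le_sum fun d _ => ?_
  rw [← add_mul]
  refine mul_le_mul_of_nonneg_right ?_ (by positivity)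
  rw [← hm d]
  have hmd : (m d : ℝ) ≠ 0 := by
    have := hm d ▸ hbpos
    exact_mod_cast (Nat.pos_of_mul_pos_left this).ne'
  push_cast
  rw [mul_div_mul_right _ _ hmd]
  exact (hlt d).le

/-- A bit can be sent through the noiseless qubit channel. -/
theorem cohom_bit_qubit : Cohom
    (bigSum (r := 1) (V := fun _ => Fin 2) fun _ => ⊥)
    (bigSum (r := 2) (V := fun d => Fin d.1) fun _ => ⊥) := by
  let o : Fin (1 : Fin 2).1 := ⟨0, Nat.one_pos⟩
  refine ⟨2, fun i => Matrix.single ⟨1, (o, i)⟩ ⟨0, (i, 0)⟩ 1, ?_, fun i j M hM => ?_⟩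
  · simp only [Matrix.conjTranspose_single, Matrix.single_mul_single_same, star_one, mul_one]
    ext ⟨d, x, y⟩ ⟨d', x', y'⟩
    obtain rfl := Subsingleton.elim d 0
    obtain rfl := Subsingleton.elim d' 0
    obtain rfl : y = 0 := Fin.fin_one_eq_zero y
    obtain rfl : y' = 0 := Fin.fin_one_eq_zero y'
    fin_cases x <;> fin_cases x' <;> simp [Fin.sum_univ_two]
  · obtain ⟨c, -, hc⟩ := exists_coeff_of_mem_ncTensor (hM.2 1)
    have hM' : M ⟨1, (o, i)⟩ ⟨1, (o, j)⟩ = if i = j then c o o else 0 := by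
      refine (congrFun (congrFun hc (o, i)) (o, j)).trans ?_
      rw [kroneckerMap_apply, Matrix.one_apply, mul_ite, mul_one, mul_zero]
    rw [Matrix.conjTranspose_single, Matrix.single_mul_mul_single, hM']
    by_cases hij : i = j
    · subst hij
      have h := Submodule.smul_mem _ (c o o) (blockUnit_mem_bigSum (r := 1) (V := fun _ => Fin 2)
        (fun _ => ⊥) 0 i i (Or.inr rfl))
      convert h using 1
      simp [blockUnit]
    · simp [hij]

theorem one_le_of_monotoneExt {α : ℝ} (h : MonotoneExt (fun (V : Type) (iV : Fintype V)
      (eV : DecidableEq V) (G : SimpleGraph V) => @projRank V iV eV Gᶜ) α) : 1 ≤ α := by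
  have hle := h 2 1 (fun d => Fin d.1) (fun _ => Fin 2) (fun _ => ⊥) (fun _ => ⊥) cohom_bit_qubit
  have hlow : (2 : ℝ) ≤ projRank (⊥ : SimpleGraph (Fin 2))ᶜ := by
    refine le_of_forall_pos_le_add fun ε hε => ?_
    obtain ⟨a, b, hb, ⟨A, hA1, hA2⟩, hlt⟩ := exists_isometricRep_lt (⊥ : SimpleGraph (Fin 2))ᶜ hε
    refine le_trans ?_ hlt.le
    let C : Matrix (Fin a) (Fin 2 × Fin b) ℂ := Matrix.of fun x q => A q.1 x q.2
    have hC : Cᴴ * C = 1 := by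
      ext ⟨g, k⟩ ⟨g', k'⟩
      have hCA : (Cᴴ * C) (g, k) (g', k') = ((A g)ᴴ * A g') k k' := rfl
      rw [hCA]
      by_cases hg : g = g'
      · subst hg
        simp [hA1, Matrix.one_apply]
      · rw [hA2 g g' (by simpa using hg)]
        simp [hg]
    have hcard := card_le_of_conjTranspose_mul_self_eq_one hC
    simp only [Fintype.card_fin, Fintype.card_prod] at hcard
    rw [le_div_iff₀ (by exact_mod_cast hb)]
    exact_mod_cast hcard
  have hup : ∀ d : Fin 2, projRank (⊥ : SimpleGraph (Fin d.1))ᶜ ≤ d.1 := fun d => by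
    simpa using (isometricRep_coordinates (⊥ : SimpleGraph (Fin d.1))ᶜ).projRank_le
  have h0 := hup 0
  have h1 := hup 1
  simp only [Fin.sum_univ_two, Fin.sum_univ_one] at hle
  norm_num at hle h0 h1 hlow
  have h2 : (2 : ℝ) ^ (1 : ℝ) ≤ 2 ^ α := by
    have hpos : (0 : ℝ) < 2 ^ α := by positivity
    rw [Real.rpow_one]
    nlinarith
  exact (Real.rpow_le_rpow_left_iff one_lt_two).1 h2

theorem projRankCompl_admissible_iff (α : ℝ) :
    MonotoneExt (fun (V : Type) (iV : Fintype V) (eV : DecidableEq V)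
      (G : SimpleGraph V) => @projRank V iV eV Gᶜ) α ↔ 1 ≤ α := by
  exact ⟨one_le_of_monotoneExt, monotoneExt_of_one_le⟩

end NCG
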